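/- Let n ≥ 3 and let σ be an admissible signature function on the triples of [n]. Then for every integer k with 0 ≤ k < n/2 − 1, E_{≤≤k}(σ) ≥ 3·C(k+3, 3). -/

import Mathlib

/-- `Zval n` is Hill's conjectured value
`Z(n) = (1/4)⌊n/2⌋⌊(n−1)/2⌋⌊(n−2)/2⌋⌊(n−3)/2⌋` for the crossing number of `K n`.
(The product of the four floors is always divisible by 4, so natural division is exact.) -/
def Zval (n : ℕ) : ℕ :=
  n / 2 * ((n - 1) / 2) * ((n - 2) / 2) * ((n - 3) / 2) / 4

/-- An x-monotone drawing of the complete graph `K n`: vertices `v i = (x i, 0)` with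
`x` strictly increasing, and for each pair `i < j` a continuous function `e i j` on
`[x i, x j]` vanishing at the endpoints, whose graph is the arc of the edge `{i, j}`.
Edges avoid the intermediate vertices, any two distinct edges meet in finitely many
interior parameters, and at each such common point the difference changes sign
(a proper crossing). -/
structure XMonotoneDrawing (n : ℕ) where
  x : Fin n → ℝ
  x_strictMono : StrictMono x
  e : Fin n → Fin n → ℝ → ℝ
  cont : ∀ i j : Fin n, i < j → ContinuousOn (e i j) (Set.Icc (x i) (x j))
  end_left : ∀ i j : Fin n, i < j → e i j (x i) = 0
  end_right : ∀ i j : Fin n, i < j → e i j (x j) = 0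
  avoid_vertex : ∀ i m j : Fin n, i < m → m < j → e i j (x m) ≠ 0
  cross_finite : ∀ i j k l : Fin n, i < j → k < l → (i, j) ≠ (k, l) →
    {t : ℝ | max (x i) (x k) < t ∧ t < min (x j) (x l) ∧ e i j t = e k l t}.Finite
  sign_change : ∀ i j k l : Fin n, i < j → k < l → (i, j) ≠ (k, l) →
    ∀ t : ℝ, max (x i) (x k) < t → t < min (x j) (x l) → e i j t = e k l t →
      ∃ ε > (0 : ℝ), ∀ s : ℝ, max (x i) (x k) < s → t - ε < s → s < t →
        ∀ u : ℝ, u < min (x j) (x l) → t < u → u < t + ε →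
          (e i j s - e k l s) * (e i j u - e k l u) < 0

namespace XMonotoneDrawing

variable {n : ℕ}

/-- The set of parameters at which the edges `{i,j}` and `{k,l}` cross
(both edges are parametrized over the `x`-axis). -/
def crossSet (D : XMonotoneDrawing n) (i j k l : Fin n) : Set ℝ :=
  {t : ℝ | max (D.x i) (D.x k) < t ∧ t < min (D.x j) (D.x l) ∧ D.e i j t = D.e k l t}

/-- The number of crossings between the edges `{i,j}` and `{k,l}`. -/
noncomputable def crossCount (D : XMonotoneDrawing n) (i j k l : Fin n) : ℕ :=
  (D.crossSet i j k l).ncard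

/-- Two edges `{i,j}` and `{k,l}` are adjacent if they share an endpoint index. -/
def Adj (i j k l : Fin n) : Prop := i = k ∨ i = l ∨ j = k ∨ j = l

/-- A drawing is semisimple if no two adjacent edges cross. -/
def Semisimple (D : XMonotoneDrawing n) : Prop :=
  ∀ i j k l : Fin n, i < j → k < l → (i, j) ≠ (k, l) → Adj i j k l →
    D.crossCount i j k l = 0

/-- A drawing is weakly semisimple if every two adjacent edges cross an even
number of times. -/
def WeaklySemisimple (D : XMonotoneDrawing n) : Prop :=
  ∀ i j k l : Fin n, i < j → k < l → (i, j) ≠ (k, l) → Adj i j k l →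
    Even (D.crossCount i j k l)

/-- A drawing is simple if no two adjacent edges cross and every two non-adjacent
edges cross at most once. -/
def Simple (D : XMonotoneDrawing n) : Prop :=
  ∀ i j k l : Fin n, i < j → k < l → (i, j) ≠ (k, l) →
    (Adj i j k l → D.crossCount i j k l = 0) ∧
    (¬ Adj i j k l → D.crossCount i j k l ≤ 1)

/-- `cr D`: the total number of crossings of `D`. (Each unordered pair of distinct
edges is counted twice in the sum, whence the division by 2; `crossCount` is
symmetric in the two edges.) -/
noncomputable def cr (D : XMonotoneDrawing n) : ℕ :=
  (∑ p : (Fin n × Fin n) × (Fin n × Fin n),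
      if p.1.1 < p.1.2 ∧ p.2.1 < p.2.2 ∧ p.1 ≠ p.2 then
        D.crossCount p.1.1 p.1.2 p.2.1 p.2.2
      else 0) / 2

/-- `ocr D`: the number of unordered pairs of edges of `D` crossing an odd number
of times. (Each unordered pair appears twice as an ordered pair.) -/
noncomputable def ocr (D : XMonotoneDrawing n) : ℕ :=
  {p : (Fin n × Fin n) × (Fin n × Fin n) |
    p.1.1 < p.1.2 ∧ p.2.1 < p.2.2 ∧ p.1 ≠ p.2 ∧
      Odd (D.crossCount p.1.1 p.1.2 p.2.1 p.2.2)}.ncard / 2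

/-- The signature of the triple `i < j < k`: `true` (i.e. `+`) if the vertex `v j`
lies below the edge `{i, k}`, i.e. `e i k (x j) > 0`, and `false` (i.e. `−`) otherwise. -/
noncomputable def sig (D : XMonotoneDrawing n) (i j k : Fin n) : Bool :=
  if 0 < D.e i k (D.x j) then true else false

/-- `D` realizes the signature function `σ` if `σ_D` and `σ` agree on all
increasing triples. -/
def Realizes (D : XMonotoneDrawing n) (σ : Fin n → Fin n → Fin n → Bool) : Prop :=
  ∀ i j k : Fin n, i < j → j < k → D.sig i j k = σ i j k

/-- A drawing is pseudolinear if its edges extend to continuous curves over all of `ℝ`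
that avoid all vertices other than their endpoints and such that any two of these
extended curves cross exactly once (the crossing being a sign change of the difference). -/
def Pseudolinear (D : XMonotoneDrawing n) : Prop :=
  ∃ p : Fin n → Fin n → ℝ → ℝ,
    (∀ i j : Fin n, i < j → Continuous (p i j)) ∧
    (∀ i j : Fin n, i < j → ∀ t ∈ Set.Icc (D.x i) (D.x j), p i j t = D.e i j t) ∧
    (∀ i j m : Fin n, i < j → m ≠ i → m ≠ j → p i j (D.x m) ≠ 0) ∧
    (∀ i j k l : Fin n, i < j → k < l → (i, j) ≠ (k, l) →
      ∃ t : ℝ, p i j t = p k l t ∧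
        ∀ s u : ℝ, s < t → t < u →
          (p i j s - p k l s) * (p i j u - p k l u) < 0)

/-- The arc of the edge `{i, j}` as a subset of the plane `ℝ × ℝ`. -/
def edgeArc (D : XMonotoneDrawing n) (i j : Fin n) : Set (ℝ × ℝ) :=
  {q : ℝ × ℝ | D.x i ≤ q.1 ∧ q.1 ≤ D.x j ∧ q.2 = D.e i j q.1}

/-- The union of all edge arcs of the drawing. -/
def arcUnion (D : XMonotoneDrawing n) : Set (ℝ × ℝ) :=
  ⋃ i : Fin n, ⋃ j : Fin n, ⋃ (_ : i < j), D.edgeArc i j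

end XMonotoneDrawing

namespace Sig

variable {n : ℕ}

/-- With respect to a signature function `σ`, the vertex `m ∉ {i, j}` is on the left of
the directed edge `(i, j)` (where `i < j`). -/
def LeftOf (σ : Fin n → Fin n → Fin n → Bool) (i j m : Fin n) : Prop :=
  (i < m ∧ m < j ∧ σ i m j = false) ∨ (m < i ∧ σ m i j = true) ∨ (j < m ∧ σ i j m = true)

/-- The number of vertices on the left of the directed edge `(i, j)`. -/
noncomputable def leftCount (σ : Fin n → Fin n → Fin n → Bool) (i j : Fin n) : ℕ :=
  {m : Fin n | LeftOf σ i j m}.ncard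

/-- The edge `{i, j}` (with `i < j`) is a `k`-edge of `σ` if `min(ℓ, n − 2 − ℓ) = k`,
where `ℓ` is the number of vertices on its left. -/
def IsKEdge (σ : Fin n → Fin n → Fin n → Bool) (k : ℕ) (i j : Fin n) : Prop :=
  min (leftCount σ i j) (n - 2 - leftCount σ i j) = k

/-- `Ek σ k`: the number of `k`-edges of `σ`. -/
noncomputable def Ek (σ : Fin n → Fin n → Fin n → Bool) (k : ℕ) : ℕ :=
  {p : Fin n × Fin n | p.1 < p.2 ∧ IsKEdge σ k p.1 p.2}.ncard

/-- `Ele σ k = E_{≤k}(σ)`: the number of `≤k`-edges of `σ`. -/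
noncomputable def Ele (σ : Fin n → Fin n → Fin n → Bool) (k : ℕ) : ℕ :=
  ∑ i ∈ Finset.range (k + 1), Ek σ i

/-- `Elele σ k = E_{≤≤k}(σ) = Σ_{j=0}^{k} E_{≤j}(σ)`. -/
noncomputable def Elele (σ : Fin n → Fin n → Fin n → Bool) (k : ℕ) : ℕ :=
  ∑ j ∈ Finset.range (k + 1), Ele σ j

/-- `E_{≤≤k}` with an integer index, which vanishes for negative `k`. -/
noncomputable def ElelZ (σ : Fin n → Fin n → Fin n → Bool) (k : ℤ) : ℕ :=
  if 0 ≤ k then Elele σ k.toNat else 0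

/-- The left count of the edge `{i, j}` in the drawing restricted to the first
`n − 1` vertices (the last vertex deleted). -/
noncomputable def leftCountRes (σ : Fin n → Fin n → Fin n → Bool) (i j : Fin n) : ℕ :=
  {m : Fin n | LeftOf σ i j m ∧ (m : ℕ) + 1 < n}.ncard

/-- The edge `{i, j}` is a `k`-edge of the restriction of `σ` to the first `n − 1`
vertices (there `min(ℓ', (n−1) − 2 − ℓ') = k`). -/
def IsKEdgeRes (σ : Fin n → Fin n → Fin n → Bool) (k : ℕ) (i j : Fin n) : Prop :=
  min (leftCountRes σ i j) (n - 3 - leftCountRes σ i j) = k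

/-- The edge `{i, j}` is a `(D,D')`-invariant `≤k`-edge: it avoids the last vertex and
is an `m`-edge with `m ≤ k` both in `σ` and in the restriction of `σ` to the first
`n − 1` vertices. -/
def InvariantLeK (σ : Fin n → Fin n → Fin n → Bool) (k : ℕ) (i j : Fin n) : Prop :=
  (j : ℕ) + 1 < n ∧ (∃ m ≤ k, IsKEdge σ m i j) ∧ (∃ m ≤ k, IsKEdgeRes σ m i j)

/-- The ten 4-tuple forms allowed in signature functions of semisimple x-monotone
drawings: `++++, −−−−, ++−−, −−++, −++−, +−−+, −−−+, +++−, +−−−, −+++`. -/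
def AllowedForm (a b c d : Bool) : Prop :=
  (a, b, c, d) ∈ ([(true, true, true, true), (false, false, false, false),
    (true, true, false, false), (false, false, true, true),
    (false, true, true, false), (true, false, false, true),
    (false, false, false, true), (true, true, true, false),
    (true, false, false, false), (false, true, true, true)] :
      List (Bool × Bool × Bool × Bool))

/-- A signature function is admissible if every increasing 4-tuple is of one of the
ten allowed forms. -/
def Admissible (σ : Fin n → Fin n → Fin n → Bool) : Prop :=
  ∀ a b c d : Fin n, a < b → b < c → c < d →
    AllowedForm (σ a b c) (σ a b d) (σ a c d) (σ b c d)

/-- The six convex forms: `++++, −−−−, ++−−, −−++, −++−, +−−+`. -/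
def ConvexForm (a b c d : Bool) : Prop :=
  (a, b, c, d) ∈ ([(true, true, true, true), (false, false, false, false),
    (true, true, false, false), (false, false, true, true),
    (false, true, true, false), (true, false, false, true)] :
      List (Bool × Bool × Bool × Bool))

/-- The 4-tuple `a < b < c < d` is convex in `σ`. -/
def Convex4 (σ : Fin n → Fin n → Fin n → Bool) (a b c d : Fin n) : Prop :=
  ConvexForm (σ a b c) (σ a b d) (σ a c d) (σ b c d)

/-- The eight 4-tuple forms of pseudolinear x-monotone drawings (the sign-monotone
sequences): `++++, +++−, ++−−, +−−−, −−−−, −−−+, −−++, −+++`. -/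
def PLForm (a b c d : Bool) : Prop :=
  (a, b, c, d) ∈ ([(true, true, true, true), (true, true, true, false),
    (true, true, false, false), (true, false, false, false),
    (false, false, false, false), (false, false, false, true),
    (false, false, true, true), (false, true, true, true)] :
      List (Bool × Bool × Bool × Bool))

/-- The relation `j ⋖ k` on `{j : i < j}`: `j ⋖ k` iff (`j < k` and `σ i j k = +`)
or (`k < j` and `σ i k j = −`). -/
def Below (σ : Fin n → Fin n → Fin n → Bool) (i j k : Fin n) : Prop :=
  (j < k ∧ σ i j k = true) ∨ (k < j ∧ σ i k j = false)

end Sig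

/-!
The allowed forms are exactly those in which neither the first three nor the last three signs
alternate. Orient the pairs of vertices after a fixed `i` from `m` to `j` when `m` is left of
`(i, j)`, and the pairs before a fixed `v` from `m` to `i` when `m` is left of `(i, v)`. A cyclic
triple in one of these tournaments would be an alternation, so both are linear orders.

Now delete the last vertex `v`, replacing `E_{≤≤K}`, which is the sum of `K + 1 - k` over all
`k`-edges with `k ≤ K`, by `E_{≤≤K-1}`. By the second order, the edges at `v` have depths
`0, 0, 1, 1, …`, so losing them costs `2 C(K+2, 2)`. An edge `{i, j}` avoiding `v` costs at least
one more unit if at most `K` vertices lie on its side opposite to `v`; by the first order, a vertex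
`i` with `ι` predecessors is the left end of at least `K + 1 - ι` such edges, together `C(K+2, 2)`.
Summing `3 C(K+2, 2)` over the deletions gives `3 C(K+3, 3)`.
-/

open Finset

section StrictTotalOrder

variable {α : Type*} {r : α → α → Prop} {S : Finset α}

/-- The relation `r` restricts to a strict total order on the finset `S`; outside `S` nothing is
assumed, unlike for `IsStrictTotalOrder`. -/
structure IsStrictTotalOn (r : α → α → Prop) (S : Finset α) : Prop where
  irrefl : ∀ a ∈ S, ¬ r a a
  trans : ∀ a ∈ S, ∀ b ∈ S, ∀ c ∈ S, r a b → r b c → r a c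
  total : ∀ a ∈ S, ∀ b ∈ S, a ≠ b → r a b ∨ r b a

/-- The number of `r`-predecessors of `a` in `S`: the position of `a`, counted from `0`, when `r`
is a strict total order on `S`. -/
def rankIn (r : α → α → Prop) [DecidableRel r] (S : Finset α) (a : α) : ℕ :=
  #{b ∈ S | r b a}

namespace IsStrictTotalOn

theorem swap (hr : IsStrictTotalOn r S) : IsStrictTotalOn (Function.swap r) S where
  irrefl := hr.irrefl
  trans a ha b hb c hc hab hbc := hr.trans c hc b hb a ha hbc hab
  total a ha b hb hab := hr.total b hb a ha hab.symm

theorem asymm (hr : IsStrictTotalOn r S) {a b : α} (ha : a ∈ S) (hb : b ∈ S) (hab : r a b) :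
    ¬ r b a :=
  fun hba => hr.irrefl a ha (hr.trans a ha b hb a ha hab hba)

theorem of_increasing [LinearOrder α] (irrefl : ∀ a ∈ S, ¬ r a a)
    (tournament : ∀ a ∈ S, ∀ b ∈ S, a < b → (r b a ↔ ¬ r a b))
    (acyclic : ∀ a ∈ S, ∀ b ∈ S, ∀ c ∈ S, a < b → b < c → (r a b ↔ r b c) → (r a c ↔ r a b)) :
    IsStrictTotalOn r S where
  irrefl := irrefl
  trans a ha b hb c hc hab hbc := by
    have hab_ne : a ≠ b := by rintro rfl; exact irrefl a ha hab
    have hbc_ne : b ≠ c := by rintro rfl; exact irrefl b hb hbc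
    rcases lt_or_gt_of_ne hab_ne with h₁ | h₁ <;> rcases lt_or_gt_of_ne hbc_ne with h₂ | h₂ <;>
      rcases lt_trichotomy a c with h₃ | rfl | h₃ <;> grind
  total a ha b hb hab := by
    rcases lt_or_gt_of_ne hab with h | h
    · have := tournament a ha b hb h
      tauto
    · have := tournament b hb a ha h
      tauto

variable [DecidableRel r]

theorem rankIn_lt_rankIn (hr : IsStrictTotalOn r S) {a b : α} (ha : a ∈ S) (hb : b ∈ S)
    (hab : r a b) : rankIn r S a < rankIn r S b := by
  refine card_lt_card ((ssubset_iff_of_subset fun c hc => ?_).2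
    ⟨a, mem_filter.2 ⟨ha, hab⟩, fun h => hr.irrefl a ha (mem_filter.1 h).2⟩)
  obtain ⟨hcS, hca⟩ := mem_filter.1 hc
  exact mem_filter.2 ⟨hcS, hr.trans c hcS a ha b hb hca hab⟩

theorem rankIn_lt_rankIn_iff (hr : IsStrictTotalOn r S) {a b : α} (ha : a ∈ S) (hb : b ∈ S) :
    rankIn r S a < rankIn r S b ↔ r a b := by
  refine ⟨fun h => ?_, hr.rankIn_lt_rankIn ha hb⟩
  have hne : a ≠ b := by rintro rfl; exact h.false
  exact (hr.total a ha b hb hne).resolve_right fun hba => (hr.rankIn_lt_rankIn hb ha hba).asymm h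

theorem rankIn_injOn (hr : IsStrictTotalOn r S) : Set.InjOn (rankIn r S) S := by
  intro a ha b hb hab
  by_contra hne
  rcases hr.total a ha b hb hne with h | h
  · exact (hr.rankIn_lt_rankIn ha hb h).ne hab
  · exact (hr.rankIn_lt_rankIn hb ha h).ne hab.symm

theorem rankIn_lt_card (hr : IsStrictTotalOn r S) {a : α} (ha : a ∈ S) : rankIn r S a < #S :=
  card_lt_card (filter_ssubset.2 ⟨a, ha, hr.irrefl a ha⟩)

theorem sum_rankIn {M : Type*} [AddCommMonoid M] (hr : IsStrictTotalOn r S) (f : ℕ → M) :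
    ∑ a ∈ S, f (rankIn r S a) = ∑ t ∈ range #S, f t := by
  have hmaps : Set.MapsTo (rankIn r S) S (range #S) := fun a ha =>
    mem_coe.2 (mem_range.2 (hr.rankIn_lt_card ha))
  exact sum_nbij (rankIn r S) hmaps hr.rankIn_injOn
    (surjOn_of_injOn_of_card_le _ hmaps hr.rankIn_injOn (card_range _).le) fun _ _ => rfl

theorem rankIn_add_rankIn_swap (hr : IsStrictTotalOn r S) {a : α} (ha : a ∈ S) :
    rankIn r S a + rankIn (Function.swap r) S a + 1 = #S := by
  classical
  have hdisj : Disjoint {b ∈ S | r b a} {b ∈ S | r a b} :=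
    disjoint_filter.2 fun b hb hba => hr.asymm hb ha hba
  have hunion : ({b ∈ S | r b a} : Finset α) ∪ {b ∈ S | r a b} = S.erase a := by
    ext b
    have := hr.irrefl a ha
    have := hr.total a ha b
    grind
  rw [← card_erase_add_one ha, ← hunion, card_union_of_disjoint hdisj]
  rfl

theorem card_filter_rel_and_rankIn_lt (hr : IsStrictTotalOn r S) {v : α} (hv : v ∈ S) (k : ℕ) :
    #{a ∈ S | r a v ∧ rankIn r S a < k} = min k (rankIn r S v) := by
  have hv_lt := hr.rankIn_lt_card hv
  calc #{a ∈ S | r a v ∧ rankIn r S a < k}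
      = #{a ∈ S | rankIn r S a < min k (rankIn r S v)} := by
        congr 1
        refine filter_congr fun a ha => ?_
        rw [lt_min_iff, hr.rankIn_lt_rankIn_iff ha hv, and_comm]
    _ = #{t ∈ range #S | t < min k (rankIn r S v)} := by
        simp only [card_filter]
        exact hr.sum_rankIn fun t => if t < min k (rankIn r S v) then 1 else 0
    _ = #(range (min k (rankIn r S v))) := by
        congr 1
        ext t
        simp only [mem_filter, mem_range]
        omega
    _ = min k (rankIn r S v) := card_range _

end IsStrictTotalOn

/-- The elements of `S` that `a` separates from `v`, that is, for which `a` lies strictly between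
them and `v`. -/
def separatedFrom (r : α → α → Prop) [DecidableRel r] (S : Finset α) (v a : α) : Finset α :=
  {b ∈ S | r b a ∧ r a v ∨ r v a ∧ r a b}

theorem IsStrictTotalOn.min_le_card_separatedFrom_lt [DecidableEq α] [DecidableRel r]
    (hr : IsStrictTotalOn r S) {v : α} (hv : v ∈ S) (k : ℕ) :
    min k (#S - 1) ≤ #{a ∈ S | a ≠ v ∧ #(separatedFrom r S v a) < k} := by
  set before : Finset α := {a ∈ S | r a v ∧ rankIn r S a < k}
  set after : Finset α := {a ∈ S | r v a ∧ rankIn (Function.swap r) S a < k}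
  have hdisj : Disjoint before after :=
    disjoint_filter.2 fun a ha hav hva => hr.asymm ha hv hav.1 hva.1
  have hsub : before ∪ after ⊆ {a ∈ S | a ≠ v ∧ #(separatedFrom r S v a) < k} := by
    intro a ha
    have hirr := hr.irrefl v hv
    rcases mem_union.1 ha with h | h
    · obtain ⟨haS, hav, hlt⟩ := mem_filter.1 h
      have hva := hr.asymm haS hv hav
      refine mem_filter.2 ⟨haS, fun h => hirr (h ▸ hav), ?_⟩
      simpa [separatedFrom, rankIn, hav, hva] using hlt
    · obtain ⟨haS, hva, hlt⟩ := mem_filter.1 h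
      have hav := hr.asymm hv haS hva
      refine mem_filter.2 ⟨haS, fun h => hirr (h ▸ hva), ?_⟩
      simpa [separatedFrom, rankIn, hav, hva, Function.swap] using hlt
  calc min k (#S - 1) ≤ min k (rankIn r S v) + min k (rankIn (Function.swap r) S v) := by
        have := hr.rankIn_add_rankIn_swap hv
        omega
    _ = #(before ∪ after) := by
        rw [card_union_of_disjoint hdisj, hr.card_filter_rel_and_rankIn_lt hv,
          ← hr.swap.card_filter_rel_and_rankIn_lt hv]
    _ ≤ _ := card_le_card hsub

end StrictTotalOrder

section IncreasingPairs

variable {α : Type*} [LinearOrder α]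

theorem isStrictTotalOn_lt (S : Finset α) : IsStrictTotalOn (· < ·) S where
  irrefl a _ := lt_irrefl a
  trans _ _ _ _ _ _ := lt_trans
  total _ _ _ _ := lt_or_gt_of_ne

/-- The edges of the complete graph on `S`, each listed with its smaller vertex first. -/
def increasingPairs (S : Finset α) : Finset (α × α) :=
  {p ∈ S ×ˢ S | p.1 < p.2}

theorem mem_increasingPairs {S : Finset α} {p : α × α} :
    p ∈ increasingPairs S ↔ p.1 ∈ S ∧ p.2 ∈ S ∧ p.1 < p.2 := by
  simp [increasingPairs, and_assoc]

theorem sum_increasingPairs_insert {M : Type*} [AddCommMonoid M] {S : Finset α} {v : α}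
    (hv : ∀ a ∈ S, a < v) (f : α × α → M) :
    ∑ p ∈ increasingPairs (insert v S), f p =
      ∑ p ∈ increasingPairs S, f p + ∑ a ∈ S, f (a, v) := by
  have hdisj : Disjoint (increasingPairs S) (S ×ˢ {v}) := by
    refine disjoint_left.2 fun p hp hpv => ?_
    have hp₂ := hv p.2 (mem_increasingPairs.1 hp).2.1
    exact hp₂.ne (mem_singleton.1 (mem_product.1 hpv).2)
  have hunion : increasingPairs (insert v S) = increasingPairs S ∪ S ×ˢ {v} := by
    ext ⟨a, b⟩
    simp only [mem_increasingPairs, mem_union, mem_product, mem_insert, mem_singleton]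
    grind
  rw [hunion, sum_union hdisj, sum_product]
  simp only [sum_singleton]

theorem card_filter_increasingPairs (S : Finset α) (P : α × α → Prop) [DecidablePred P] :
    #{p ∈ increasingPairs S | P p} = ∑ a ∈ S, #{b ∈ S | a < b ∧ P (a, b)} := by
  simp only [increasingPairs, filter_filter, card_filter, sum_product]

end IncreasingPairs

theorem sum_range_sub {K N : ℕ} (h : K ≤ N) :
    ∑ t ∈ range N, (K - t) = (K + 1).choose 2 := by
  induction K generalizing N with
  | zero => simp
  | succ K ih =>
    obtain ⟨N, rfl⟩ := Nat.exists_eq_add_of_le' (Nat.one_le_of_lt h)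
    rw [sum_range_succ', Nat.choose_succ_succ' (K + 1) 1, Nat.choose_one_right, Nat.sub_zero,
      add_comm]
    simp only [Nat.add_sub_add_right, ih (Nat.le_of_succ_le_succ h)]

theorem sum_range_sub_min {K N : ℕ} (h : 2 * K ≤ N) :
    ∑ t ∈ range N, (K - min t (N - 1 - t)) = 2 * (K + 1).choose 2 := by
  calc ∑ t ∈ range N, (K - min t (N - 1 - t))
      = ∑ t ∈ range N, ((K - t) + (K - (N - 1 - t))) := by
        refine sum_congr rfl fun t ht => ?_
        have := mem_range.1 ht
        omega
    _ = ∑ t ∈ range N, (K - t) + ∑ t ∈ range N, (K - t) := by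
        rw [sum_add_distrib, sum_range_reflect (K - ·)]
    _ = 2 * (K + 1).choose 2 := by
        rw [sum_range_sub (by omega), two_mul]

theorem sum_card_filter_lt {ι : Type*} (s : Finset ι) (f : ι → ℕ) (K : ℕ) :
    ∑ j ∈ range K, #{a ∈ s | f a < j + 1} = ∑ a ∈ s, (K - f a) := by
  simp only [card_filter]
  rw [sum_comm]
  refine sum_congr rfl fun a _ => ?_
  rw [← card_filter, ← Nat.card_Ico]
  congr 1
  ext j
  simp only [mem_filter, mem_range, mem_Ico]
  omega

namespace Sig

variable {n : ℕ} {σ : Fin n → Fin n → Fin n → Bool}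

theorem leftOf_iff_of_between {i m j : Fin n} (him : i < m) (hmj : m < j) :
    LeftOf σ i j m ↔ σ i m j = false := by
  simp [LeftOf, him, hmj, him.asymm, hmj.asymm]

theorem leftOf_iff_of_lt {m i j : Fin n} (hmi : m < i) (hij : i < j) :
    LeftOf σ i j m ↔ σ m i j = true := by
  simp [LeftOf, hmi, hmi.asymm, (hmi.trans hij).asymm]

theorem leftOf_iff_of_gt {i j m : Fin n} (hij : i < j) (hjm : j < m) :
    LeftOf σ i j m ↔ σ i j m = true := by
  simp [LeftOf, hjm, hjm.asymm, (hij.trans hjm).asymm]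

theorem not_leftOf_first {i j : Fin n} (hij : i < j) : ¬ LeftOf σ i j i := by
  simp [LeftOf, hij.asymm]

theorem not_leftOf_second {i j : Fin n} (hij : i < j) : ¬ LeftOf σ i j j := by
  simp [LeftOf, hij.asymm]

theorem leftOf_iff_not_leftOf_swap {i a b : Fin n} (hia : i < a) (hib : i < b) (hab : a ≠ b) :
    LeftOf σ i a b ↔ ¬ LeftOf σ i b a := by
  rcases lt_or_gt_of_ne hab with h | h
  · rw [leftOf_iff_of_gt hia h, leftOf_iff_of_between hia h, Bool.not_eq_false]
  · rw [leftOf_iff_of_between hib h, leftOf_iff_of_gt hib h, Bool.not_eq_true]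

instance (σ : Fin n → Fin n → Fin n → Bool) (i j m : Fin n) : Decidable (LeftOf σ i j m) :=
  inferInstanceAs (Decidable (_ ∨ _))

theorem allowedForm_iff {a b c d : Bool} :
    AllowedForm a b c d ↔ (a = b ∨ b = c) ∧ (b = c ∨ c = d) := by
  revert a b c d
  unfold AllowedForm
  decide

theorem Admissible.isStrictTotalOn_leftOf_from (hσ : Admissible σ) {i : Fin n}
    {S : Finset (Fin n)} (hi : ∀ a ∈ S, i < a) :
    IsStrictTotalOn (fun m j => LeftOf σ i j m) S := by
  refine .of_increasing (fun a ha => not_leftOf_second (hi a ha))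
    (fun a ha b hb hab => leftOf_iff_not_leftOf_swap (hi a ha) (hi b hb) hab.ne) ?_
  intro a ha b hb c _ hab hbc
  have hia := hi a ha
  have hib := hi b hb
  have hsign := (allowedForm_iff.1 (hσ i a b c hia hab hbc)).1
  rw [leftOf_iff_of_between hia hab, leftOf_iff_of_between hib hbc,
    leftOf_iff_of_between hia (hab.trans hbc)]
  grind

theorem Admissible.isStrictTotalOn_leftOf_to (hσ : Admissible σ) {v : Fin n}
    {S : Finset (Fin n)} (hv : ∀ a ∈ S, a < v) :
    IsStrictTotalOn (fun m i => LeftOf σ i v m) S := by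
  refine .of_increasing (fun a ha => not_leftOf_first (hv a ha)) ?_ ?_
  · intro a _ b hb hab
    rw [leftOf_iff_of_between hab (hv b hb), leftOf_iff_of_lt hab (hv b hb), Bool.not_eq_true]
  · intro a _ b hb c hc hab hbc
    have hbv := hv b hb
    have hcv := hv c hc
    have hsign := (allowedForm_iff.1 (hσ a b c v hab hbc hcv)).2
    rw [leftOf_iff_of_lt hab hbv, leftOf_iff_of_lt hbc hcv, leftOf_iff_of_lt (hab.trans hbc) hcv]
    grind

/-- The number of vertices of `S` on the left of the edge `p`. -/
def leftCountIn (σ : Fin n → Fin n → Fin n → Bool) (S : Finset (Fin n)) (p : Fin n × Fin n) : ℕ :=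
  #{m ∈ S | LeftOf σ p.1 p.2 m}

/-- The `k` for which `p` is a `k`-edge of the restriction of `σ` to `S`. The truncated
subtractions are genuine when both ends of `p` lie in `S`. -/
def depthIn (σ : Fin n → Fin n → Fin n → Bool) (S : Finset (Fin n)) (p : Fin n × Fin n) : ℕ :=
  min (leftCountIn σ S p) (#S - 2 - leftCountIn σ S p)

/-- The sum of `K - k` over the `k`-edges with `k < K` of the restriction of `σ` to `S`, which is
`E_{≤≤K-1}` of that restriction. -/
def depthWeight (σ : Fin n → Fin n → Fin n → Bool) (S : Finset (Fin n)) (K : ℕ) : ℕ :=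
  ∑ p ∈ increasingPairs S, (K - depthIn σ S p)

/-- The vertices of `S` that the edge `p` separates from `v`. -/
def oppositeSide (σ : Fin n → Fin n → Fin n → Bool) (S : Finset (Fin n)) (v : Fin n)
    (p : Fin n × Fin n) : Finset (Fin n) :=
  {m ∈ S | m ≠ p.1 ∧ m ≠ p.2 ∧ (LeftOf σ p.1 p.2 m ↔ ¬ LeftOf σ p.1 p.2 v)}

variable {S : Finset (Fin n)} {v : Fin n} {p : Fin n × Fin n}

theorem leftCountIn_insert (hv : v ∉ S) :
    leftCountIn σ (insert v S) p =
      leftCountIn σ S p + if LeftOf σ p.1 p.2 v then 1 else 0 := by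
  simp only [leftCountIn, card_filter, sum_insert hv, add_comm]

theorem card_oppositeSide_of_not_leftOf (hp : p.1 < p.2) (hv : ¬ LeftOf σ p.1 p.2 v) :
    #(oppositeSide σ S v p) = leftCountIn σ S p := by
  congr 1
  refine filter_congr fun m _ => ?_
  have h₁ := not_leftOf_first (σ := σ) hp
  have h₂ := not_leftOf_second (σ := σ) hp
  grind

theorem card_oppositeSide_of_leftOf (hp : p ∈ increasingPairs S) (hv : LeftOf σ p.1 p.2 v) :
    #(oppositeSide σ S v p) + leftCountIn σ S p + 2 = #S := by
  obtain ⟨hp₁, hp₂, hlt⟩ := mem_increasingPairs.1 hp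
  have h₁ := not_leftOf_first (σ := σ) hlt
  have h₂ := not_leftOf_second (σ := σ) hlt
  have hopp : oppositeSide σ S v p = {m ∈ S | ¬ LeftOf σ p.1 p.2 m} \ {p.1, p.2} := by
    ext m
    simp only [oppositeSide, mem_filter, mem_sdiff, mem_insert, mem_singleton]
    tauto
  have hends : ({p.1, p.2} : Finset (Fin n)) ⊆ {m ∈ S | ¬ LeftOf σ p.1 p.2 m} := by
    simp [insert_subset_iff, hp₁, hp₂, h₁, h₂]
  have hcard := card_sdiff_add_card_eq_card hends
  rw [card_pair hlt.ne, ← hopp] at hcard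
  have hsplit : leftCountIn σ S p + #{m ∈ S | ¬ LeftOf σ p.1 p.2 m} = #S :=
    card_filter_add_card_filter_not (LeftOf σ p.1 p.2)
  omega

theorem sub_depthIn_add_le {K : ℕ} (hv : v ∉ S) (hK : 2 * (K + 1) ≤ #S)
    (hp : p ∈ increasingPairs S) :
    (K - depthIn σ S p) + (if #(oppositeSide σ S v p) < K + 1 then 1 else 0) ≤
      K + 1 - depthIn σ (insert v S) p := by
  rw [depthIn, depthIn, leftCountIn_insert hv, card_insert_of_notMem hv]
  by_cases hleft : LeftOf σ p.1 p.2 v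
  · have hopp := card_oppositeSide_of_leftOf hp hleft
    rw [if_pos hleft]
    split_ifs <;> omega
  · have hopp := card_oppositeSide_of_not_leftOf (S := S) (mem_increasingPairs.1 hp).2.2 hleft
    rw [if_neg hleft]
    split_ifs <;> omega

theorem Admissible.sum_sub_depthIn_last (hσ : Admissible σ) {K : ℕ} (hv : ∀ a ∈ S, a < v)
    (hK : 2 * K ≤ #S) :
    ∑ i ∈ S, (K - depthIn σ (insert v S) (i, v)) = 2 * (K + 1).choose 2 := by
  have hvS : v ∉ S := fun h => (hv v h).false
  have hdepth : ∀ i ∈ S, depthIn σ (insert v S) (i, v) =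
      min (rankIn (fun m i => LeftOf σ i v m) S i)
        (#S - 1 - rankIn (fun m i => LeftOf σ i v m) S i) := by
    intro i hi
    rw [depthIn, leftCountIn_insert hvS, if_neg (not_leftOf_second (hv i hi)),
      card_insert_of_notMem hvS]
    rfl
  rw [← sum_range_sub_min hK,
    ← (hσ.isStrictTotalOn_leftOf_to hv).sum_rankIn fun t => K - min t (#S - 1 - t)]
  exact sum_congr rfl fun i hi => by rw [hdepth i hi]

theorem card_oppositeSide_le {i j : Fin n} (hij : i < j) (hjv : j < v) :
    #(oppositeSide σ S v (i, j)) ≤ rankIn (· < ·) S i +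
      #(separatedFrom (fun m j => LeftOf σ i j m) {m ∈ insert v S | i < m} v j) := by
  have hsub : oppositeSide σ S v (i, j) ⊆ {m ∈ S | m < i} ∪
      separatedFrom (fun m j => LeftOf σ i j m) {m ∈ insert v S | i < m} v j := by
    intro m hm
    simp only [oppositeSide, mem_filter] at hm
    obtain ⟨hmS, hmi, hmj, hside⟩ := hm
    rcases lt_or_gt_of_ne hmi with hlt | hgt
    · exact mem_union_left _ (mem_filter.2 ⟨hmS, hlt⟩)
    · refine mem_union_right _ (mem_filter.2
        ⟨mem_filter.2 ⟨mem_insert_of_mem hmS, hgt⟩, ?_⟩)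
      beta_reduce
      rw [leftOf_iff_not_leftOf_swap (hij.trans hjv) hij hjv.ne',
        leftOf_iff_not_leftOf_swap hgt hij hmj]
      by_cases hv : LeftOf σ i j v <;> simp [hv, hside]
  exact (card_le_card hsub).trans (card_union_le _ _)

theorem Admissible.sub_rankIn_le_card_oppositeSide_lt (hσ : Admissible σ) {K : ℕ}
    (hv : ∀ a ∈ S, a < v) (hK : K < #S) {i : Fin n} (hi : i ∈ S) :
    K - rankIn (· < ·) S i ≤ #{j ∈ S | i < j ∧ #(oppositeSide σ S v (i, j)) < K} := by
  set ι := rankIn (· < ·) S i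
  set T : Finset (Fin n) := {m ∈ insert v S | i < m} with T_def
  have hr : IsStrictTotalOn (fun m j => LeftOf σ i j m) T :=
    hσ.isStrictTotalOn_leftOf_from fun a ha => (mem_filter.1 ha).2
  have hvT : v ∈ T := by simp [T_def, hv i hi]
  have hcardT : ι + #T = #S := by
    have hT : T = insert v {m ∈ S | i < m} := by rw [T_def, filter_insert, if_pos (hv i hi)]
    have hvS : v ∉ ({m ∈ S | i < m} : Finset _) := fun h => (hv v (mem_filter.1 h).1).false
    rw [hT, card_insert_of_notMem hvS, ← add_assoc]
    exact (isStrictTotalOn_lt S).rankIn_add_rankIn_swap hi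
  calc K - ι ≤ min (K - ι) (#T - 1) := by omega
    _ ≤ #{j ∈ T | j ≠ v ∧ #(separatedFrom (fun m j => LeftOf σ i j m) T v j) < K - ι} :=
        hr.min_le_card_separatedFrom_lt hvT _
    _ ≤ _ := by
        refine card_le_card fun j hj => ?_
        obtain ⟨hjT, hjv, hlt⟩ := mem_filter.1 hj
        obtain ⟨hjvS, hij⟩ := mem_filter.1 hjT
        have hjS := (mem_insert.1 hjvS).resolve_left hjv
        have hle : #(oppositeSide σ S v (i, j)) ≤
            ι + #(separatedFrom (fun m j => LeftOf σ i j m) T v j) :=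
          card_oppositeSide_le hij (hv j hjS)
        exact mem_filter.2 ⟨hjS, hij, by omega⟩

theorem Admissible.choose_le_card_oppositeSide_lt (hσ : Admissible σ) {K : ℕ}
    (hv : ∀ a ∈ S, a < v) (hK : K < #S) :
    (K + 1).choose 2 ≤ #{p ∈ increasingPairs S | #(oppositeSide σ S v p) < K} := by
  rw [card_filter_increasingPairs, ← sum_range_sub hK.le,
    ← (isStrictTotalOn_lt S).sum_rankIn (K - ·)]
  exact sum_le_sum fun i hi => hσ.sub_rankIn_le_card_oppositeSide_lt hv hK hi

theorem Admissible.depthWeight_add_le_depthWeight_insert (hσ : Admissible σ) {K : ℕ}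
    (hv : ∀ a ∈ S, a < v) (hK : 2 * (K + 1) ≤ #S) :
    depthWeight σ S K + 3 * (K + 2).choose 2 ≤ depthWeight σ (insert v S) (K + 1) := by
  have hvS : v ∉ S := fun h => (hv v h).false
  have hgain : depthWeight σ S K + #{p ∈ increasingPairs S | #(oppositeSide σ S v p) < K + 1} ≤
      ∑ p ∈ increasingPairs S, (K + 1 - depthIn σ (insert v S) p) := by
    rw [depthWeight, card_filter, ← sum_add_distrib]
    exact sum_le_sum fun p hp => sub_depthIn_add_le hvS hK hp
  have hcount : (K + 2).choose 2 ≤ #{p ∈ increasingPairs S | #(oppositeSide σ S v p) < K + 1} :=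
    hσ.choose_le_card_oppositeSide_lt hv (by omega)
  have hlast : ∑ i ∈ S, (K + 1 - depthIn σ (insert v S) (i, v)) = 2 * (K + 2).choose 2 :=
    hσ.sum_sub_depthIn_last hv hK
  have hsplit : depthWeight σ (insert v S) (K + 1) = _ := sum_increasingPairs_insert hv _
  omega

theorem Admissible.choose_le_depthWeight (hσ : Admissible σ) {K : ℕ} (hK : 2 * K < #S) :
    3 * (K + 2).choose 3 ≤ depthWeight σ S K := by
  induction S using Finset.induction_on_max generalizing K with
  | empty => simp at hK
  | insert v S hv ih =>
    rw [card_insert_of_notMem fun h => (hv v h).false] at hK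
    cases K with
    | zero => simp
    | succ K =>
      calc 3 * (K + 3).choose 3 = 3 * (K + 2).choose 3 + 3 * (K + 2).choose 2 := by
            rw [Nat.choose_succ_succ' (K + 2) 2]
            ring
        _ ≤ depthWeight σ S K + 3 * (K + 2).choose 2 := by
            gcongr
            exact ih (by omega)
        _ ≤ _ := hσ.depthWeight_add_le_depthWeight_insert hv (by omega)

theorem Ek_eq_card (σ : Fin n → Fin n → Fin n → Bool) (k : ℕ) :
    Ek σ k = #{p ∈ increasingPairs univ | depthIn σ univ p = k} := by
  have hleft (i j : Fin n) : leftCount σ i j = leftCountIn σ univ (i, j) := by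
    rw [leftCount, leftCountIn, ← Set.ncard_coe_finset, coe_filter_univ]
  rw [Ek, ← Set.ncard_coe_finset]
  congr 1
  ext p
  simp [IsKEdge, depthIn, hleft, mem_increasingPairs]

theorem Ele_eq_card (σ : Fin n → Fin n → Fin n → Bool) (k : ℕ) :
    Ele σ k = #{p ∈ increasingPairs univ | depthIn σ univ p < k + 1} := by
  rw [card_eq_sum_card_fiberwise (f := depthIn σ univ) (t := range (k + 1))
    fun p hp => by simpa using (mem_filter.1 hp).2]
  refine sum_congr rfl fun i hi => ?_
  rw [Ek_eq_card, filter_filter]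
  congr 1
  refine filter_congr fun p _ => ?_
  have := mem_range.1 hi
  omega

theorem Elele_eq_depthWeight (σ : Fin n → Fin n → Fin n → Bool) (k : ℕ) :
    Elele σ k = depthWeight σ univ (k + 1) := by
  simp only [Elele, Ele_eq_card]
  exact sum_card_filter_lt _ _ _

end Sig

/-- Let `n ≥ 3` and let `σ` be an admissible signature function on the
triples of `[n]`. For every integer `k` with `0 ≤ k < n/2 − 1` (i.e. `2k + 2 < n`),
`E_{≤≤k}(σ) ≥ 3·C(k+3, 3)`. -/
theorem admissible_Elele_lower_bound (n : ℕ) (hn : 3 ≤ n)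
    (σ : Fin n → Fin n → Fin n → Bool) (hσ : Sig.Admissible σ)
    (k : ℕ) (hk : 2 * k + 2 < n) :
    3 * (k + 3).choose 3 ≤ Sig.Elele σ k := by
  rw [Sig.Elele_eq_depthWeight]
  exact hσ.choose_le_depthWeight (by rw [Finset.card_fin]; omega)
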